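/- There exists an absolute constant Cst > 0 such that for every prime p, every integer l ≥ 0, every z ∈ ℍ with Im z ≥ 1, every g ∈ SL₂(ℤ), every δ' with 0 < δ' < 1, every real X ≥ 1, and every finite set 𝒫 of primes with 𝒫 ⊆ [X, 2X] and p ∉ 𝒫, one has Σ_{(l₁,l₂) ∈ 𝒫×𝒫} M(z, g; δ', p^l, l₁·l₂) ≤ Cst·( X² + X³·√δ'·(Im z)/p^l + X⁴·δ'/p^l ). -/

import Mathlib

/-- The hyperbolic point-pair invariant `u(z,w) = |z−w|² / (Im z · Im w)`. -/
noncomputable def uInv (z w : ℂ) : ℝ := ‖z - w‖ ^ 2 / (z.im * w.im)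

/-- The Möbius action of an integer matrix on the upper half-plane. -/
noncomputable def moeb (γ : Matrix (Fin 2) (Fin 2) ℤ) (z : ℂ) : ℂ :=
  (((γ 0 0 : ℤ) : ℂ) * z + ((γ 0 1 : ℤ) : ℂ)) / (((γ 1 0 : ℤ) : ℂ) * z + ((γ 1 1 : ℤ) : ℂ))

/-- `M(z,g;δ,L,m)`: the number of matrices `γ ∈ M₂(ℤ)` with `det γ = m`, `u(γ·z, z) ≤ δ`,
and both off-diagonal entries of `g⁻¹γg` divisible by `L`. -/
noncomputable def Mcount (z : ℂ) (g : Matrix.SpecialLinearGroup (Fin 2) ℤ) (δ : ℝ)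
    (L m : ℕ) : ℕ :=
  Set.ncard {γ : Matrix (Fin 2) (Fin 2) ℤ | γ.det = (m : ℤ) ∧ uInv (moeb γ z) z ≤ δ ∧
    (L : ℤ) ∣ (((g⁻¹ : Matrix.SpecialLinearGroup (Fin 2) ℤ) : Matrix (Fin 2) (Fin 2) ℤ) * γ *
      (g : Matrix (Fin 2) (Fin 2) ℤ)) 0 1 ∧
    (L : ℤ) ∣ (((g⁻¹ : Matrix.SpecialLinearGroup (Fin 2) ℤ) : Matrix (Fin 2) (Fin 2) ℤ) * γ *
      (g : Matrix (Fin 2) (Fin 2) ℤ)) 1 0}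

/-!
The displacement of `z` under `γ = [[a, b], [c, d]]` is measured by the quadratic polynomial
`Q_γ(z) = c z² + (d - a) z - b`, namely `u(γz, z) = |Q_γ(z)|² / (det γ · (Im z)²)`. For
`det γ ≤ Y²` and `u(γz, z) ≤ δ ≤ 1` this confines `c` to an interval of length `≪ Y / Im z`, then
`d - a`, for given `c`, to one of length `≪ Y √δ`, then `b`, for given `c` and `d - a`, to one of
length `≪ Y √δ Im z`, and the trace to one of length `≪ Y`. The divisibility condition says that,
modulo `L`, the triple `(c, d - a, -b)` is a multiple of a fixed form of discriminant `1`. Hence,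
if `D` is the gcd of `L` and the leading coefficient of that form and `L = D E`, the successive
choices of `c`, `d - a` and `b` are pinned down modulo `D`, `E` and `L`. Multiplying the four
counts bounds the number of all matrices of determinant at most `Y²`, and with `Y = 2X` each
determinant is a product of an ordered pair of primes in at most two ways.
-/

open scoped MatrixGroups

local notation "Mat₂" => Matrix (Fin 2) (Fin 2) ℤ

section Counting

lemma card_le_div_add_one {V : Finset ℤ} {N : ℤ} (hN : 0 < N) {R : ℝ} (hR : 0 ≤ R)
    (hdvd : ∀ v ∈ V, ∀ w ∈ V, N ∣ v - w)
    (hdist : ∀ v ∈ V, ∀ w ∈ V, |(v : ℝ) - w| ≤ R) :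
    (V.card : ℝ) ≤ R / N + 1 := by
  have hN' : (0 : ℝ) < N := by exact_mod_cast hN
  rcases V.eq_empty_or_nonempty with rfl | hV
  · rw [Finset.card_empty, Nat.cast_zero]
    positivity
  obtain ⟨v₀, hv₀, hmin⟩ := V.exists_min_image id hV
  have hsub : V ⊆ (Finset.range (⌊R / N⌋₊ + 1)).image fun k : ℕ ↦ v₀ + N * k := by
    intro v hv
    obtain ⟨k, hk⟩ := hdvd v hv v₀ hv₀
    have hk0 : 0 ≤ k := nonneg_of_mul_nonneg_right (hk ▸ sub_nonneg.2 (hmin v hv)) hN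
    lift k to ℕ using hk0
    have hkR : (k : ℝ) ≤ R / N := by
      rw [le_div_iff₀ hN']
      calc (k : ℝ) * N = v - v₀ := by rw [mul_comm]; exact_mod_cast hk.symm
        _ ≤ R := (le_abs_self _).trans (hdist v hv v₀ hv₀)
    exact Finset.mem_image.2 ⟨k, Finset.mem_range_succ_iff.2 (Nat.le_floor hkR), by lia⟩
  have hcard : V.card ≤ ⌊R / N⌋₊ + 1 := by
    simpa using (Finset.card_le_card hsub).trans Finset.card_image_le
  calc (V.card : ℝ) ≤ ⌊R / N⌋₊ + 1 := by exact_mod_cast hcard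
    _ ≤ R / N + 1 := by gcongr; exact Nat.floor_le (by positivity)

lemma card_le_div_add_one_mul {α : Type*} {S : Finset α} (f : α → ℤ) {N : ℤ} (hN : 0 < N)
    {R K : ℝ} (hR : 0 ≤ R) (hK : 0 ≤ K)
    (hdvd : ∀ x ∈ S, ∀ y ∈ S, N ∣ f x - f y)
    (hdist : ∀ x ∈ S, ∀ y ∈ S, |(f x : ℝ) - f y| ≤ R)
    (hfiber : ∀ v, ((S.filter (f · = v)).card : ℝ) ≤ K) :
    (S.card : ℝ) ≤ (R / N + 1) * K := by
  have himage : ((S.image f).card : ℝ) ≤ R / N + 1 :=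
    card_le_div_add_one hN hR (by simpa using hdvd) (by simpa using hdist)
  have hS : S.card ≤ ⌊K⌋₊ * (S.image f).card :=
    S.card_le_mul_card_image _ fun v _ ↦ Nat.le_floor (hfiber v)
  calc (S.card : ℝ) ≤ ⌊K⌋₊ * (S.image f).card := by exact_mod_cast hS
    _ ≤ K * (R / N + 1) := by gcongr; exact Nat.floor_le hK
    _ = (R / N + 1) * K := mul_comm _ _

lemma finite_and_ncard_le_of_forall_finset {α : Type*} {s : Set α} {C : ℝ}
    (h : ∀ F : Finset α, ↑F ⊆ s → (F.card : ℝ) ≤ C) : s.Finite ∧ (s.ncard : ℝ) ≤ C := by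
  have hs : s.Finite := by
    by_contra hinf
    obtain ⟨F, hF, hcard⟩ := Set.Infinite.exists_subset_card_eq hinf (⌊C⌋₊ + 1)
    have hlt := Nat.lt_floor_add_one C
    have hle := h F hF
    rw [hcard] at hle
    push_cast at hle
    exact hle.not_gt hlt
  refine ⟨hs, ?_⟩
  rw [Set.ncard_eq_toFinset_card s hs]
  exact h _ hs.coe_toFinset.subset

end Counting

section PrimePairs

lemma eq_or_eq_swap_of_mul_eq_mul {q r : ℕ × ℕ} (hq₁ : q.1.Prime) (hq₂ : q.2.Prime)
    (hr₁ : r.1.Prime) (h : r.1 * r.2 = q.1 * q.2) : r = q ∨ r = q.swap := by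
  rcases hr₁.dvd_mul.1 (Dvd.intro _ h) with hdvd | hdvd
  · have hfst : r.1 = q.1 := (Nat.prime_dvd_prime_iff_eq hr₁ hq₁).1 hdvd
    rw [hfst] at h
    exact .inl (Prod.ext hfst (Nat.eq_of_mul_eq_mul_left hq₁.pos h))
  · have hfst : r.1 = q.2 := (Nat.prime_dvd_prime_iff_eq hr₁ hq₂).1 hdvd
    rw [hfst, mul_comm q.1] at h
    exact .inr (Prod.ext hfst (Nat.eq_of_mul_eq_mul_left hq₂.pos h))

variable {P : Finset ℕ}

lemma card_filter_mul_eq_le_two (hP : ∀ q ∈ P, q.Prime) (m : ℕ) :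
    ((P ×ˢ P).filter fun q ↦ q.1 * q.2 = m).card ≤ 2 := by
  set T := (P ×ˢ P).filter fun q ↦ q.1 * q.2 = m with hT
  rcases T.eq_empty_or_nonempty with h | ⟨q, hq⟩
  · simp [h]
  have hsub : T ⊆ {q, q.swap} := fun r hr ↦ by
    simp only [hT, Finset.mem_filter, Finset.mem_product] at hq hr
    simpa using eq_or_eq_swap_of_mul_eq_mul (hP _ hq.1.1) (hP _ hq.1.2) (hP _ hr.1.1)
      (hr.2.trans hq.2.symm)
  exact (Finset.card_le_card hsub).trans Finset.card_le_two

lemma sum_product_mul_le_two_mul_sum_image (hP : ∀ q ∈ P, q.Prime) (f : ℕ → ℕ) :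
    ∑ q ∈ P ×ˢ P, f (q.1 * q.2) ≤ 2 * ∑ m ∈ (P ×ˢ P).image fun q ↦ q.1 * q.2, f m := by
  rw [Finset.sum_comp f fun q : ℕ × ℕ ↦ q.1 * q.2, Finset.mul_sum]
  exact Finset.sum_le_sum fun m _ ↦ Nat.mul_le_mul_right _ (card_filter_mul_eq_le_two hP m)

end PrimePairs

section Displacement

/-- The quadratic polynomial `Q_γ(z) = c z² + (d - a) z - b` attached to `γ = [[a, b], [c, d]]`,
whose zeros are the fixed points of `γ`. -/
def fixForm (γ : Mat₂) (z : ℂ) : ℂ :=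
  γ 1 0 * z ^ 2 + (γ 1 1 - γ 0 0) * z - γ 0 1

/-- The integer matrices `γ` with `0 < det γ ≤ Y²` that move `z` by at most `δ`, as measured by
the point-pair invariant. -/
def nearFixers (z : ℂ) (δ Y : ℝ) : Set Mat₂ :=
  {γ | 0 < γ.det ∧ (γ.det : ℝ) ≤ Y ^ 2 ∧ uInv (moeb γ z) z ≤ δ}

variable {γ γ' : Mat₂} {z : ℂ} {δ Y : ℝ}

lemma moeb_denom_ne_zero (hγ : 0 < γ.det) (hz : 0 < z.im) :
    (γ 1 0 : ℂ) * z + γ 1 1 ≠ 0 := by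
  have hrow : ![(γ 1 0 : ℝ), γ 1 1] ≠ 0 := fun h ↦ by
    have hc : γ 1 0 = 0 := by simpa using congrFun h 0
    have hd : γ 1 1 = 0 := by simpa using congrFun h 1
    simp [Matrix.det_fin_two, hc, hd] at hγ
  simpa using UpperHalfPlane.linear_ne_zero ⟨z, hz⟩ hrow

lemma moeb_sub_self (h : (γ 1 0 : ℂ) * z + γ 1 1 ≠ 0) :
    moeb γ z - z = -fixForm γ z / (γ 1 0 * z + γ 1 1) := by
  rw [moeb, fixForm, eq_div_iff h, sub_mul, div_mul_cancel₀ _ h]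
  ring

lemma moeb_im (γ : Mat₂) (z : ℂ) :
    (moeb γ z).im = γ.det * z.im / ‖(γ 1 0 : ℂ) * z + γ 1 1‖ ^ 2 := by
  rw [moeb, Complex.div_im, Complex.sq_norm, ← sub_div, Matrix.det_fin_two]
  congr 1
  simp only [Complex.add_im, Complex.mul_im, Complex.intCast_re, Complex.intCast_im, zero_mul,
    add_zero, Complex.add_re, Complex.mul_re, sub_zero, Int.cast_sub, Int.cast_mul]
  ring

lemma uInv_moeb_self (hγ : 0 < γ.det) (hz : 0 < z.im) :
    uInv (moeb γ z) z = ‖fixForm γ z‖ ^ 2 / (γ.det * z.im ^ 2) := by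
  have hdenom := moeb_denom_ne_zero hγ hz
  have hdenom' := norm_ne_zero_iff.2 hdenom
  have hdet : (γ.det : ℝ) ≠ 0 := by exact_mod_cast hγ.ne'
  rw [uInv, moeb_sub_self hdenom, moeb_im, norm_div, norm_neg]
  field_simp

lemma norm_fixForm_le (hz : 0 < z.im) (hδ : 0 ≤ δ) (hY : 0 ≤ Y) (hγ : γ ∈ nearFixers z δ Y) :
    ‖fixForm γ z‖ ≤ Y * √δ * z.im := by
  obtain ⟨hdet, hdetY, hu⟩ := hγ
  have hdet' : (0 : ℝ) < γ.det := by exact_mod_cast hdet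
  rw [uInv_moeb_self hdet hz, div_le_iff₀ (by positivity)] at hu
  refine le_of_sq_le_sq ?_ (by positivity)
  calc ‖fixForm γ z‖ ^ 2 ≤ δ * (γ.det * z.im ^ 2) := hu
    _ ≤ δ * (Y ^ 2 * z.im ^ 2) := by gcongr
    _ = (Y * √δ * z.im) ^ 2 := by rw [mul_pow, mul_pow, Real.sq_sqrt hδ]; ring

lemma trace_sq_mul_add_fixForm_re_sq (γ : Mat₂) (z : ℂ) :
    (γ.trace : ℝ) ^ 2 * z.im ^ 2 + ((fixForm γ z).re + 2 * γ 1 0 * z.im ^ 2) ^ 2 =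
      4 * γ.det * z.im ^ 2 + ‖fixForm γ z‖ ^ 2 := by
  rw [Complex.sq_norm, Complex.normSq_apply, Matrix.trace_fin_two, Matrix.det_fin_two]
  simp only [fixForm, pow_two, Complex.sub_re, Complex.add_re, Complex.mul_re,
    Complex.intCast_re, Complex.intCast_im, Complex.mul_im, zero_mul, sub_zero, Complex.sub_im,
    sub_self, Int.cast_add, Int.cast_sub, Int.cast_mul, Complex.add_im, add_zero]
  ring

lemma trace_sq_mul_add_fixForm_re_sq_le (hz : 0 < z.im) (hδ : 0 ≤ δ) (hδ' : δ ≤ 1) (hY : 0 ≤ Y)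
    (hγ : γ ∈ nearFixers z δ Y) :
    (γ.trace : ℝ) ^ 2 * z.im ^ 2 + ((fixForm γ z).re + 2 * γ 1 0 * z.im ^ 2) ^ 2 ≤
      (3 * Y * z.im) ^ 2 := by
  have hsqrt : √δ ≤ 1 := Real.sqrt_le_one.2 hδ'
  calc _ = 4 * γ.det * z.im ^ 2 + ‖fixForm γ z‖ ^ 2 := trace_sq_mul_add_fixForm_re_sq γ z
    _ ≤ 4 * Y ^ 2 * z.im ^ 2 + (Y * 1 * z.im) ^ 2 := by
      gcongr
      · exact hγ.2.1
      · exact (norm_fixForm_le hz hδ hY hγ).trans (by gcongr)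
    _ ≤ (3 * Y * z.im) ^ 2 := by linarith [sq_nonneg (Y * z.im)]

lemma abs_trace_le (hz : 0 < z.im) (hδ : 0 ≤ δ) (hδ' : δ ≤ 1) (hY : 0 ≤ Y)
    (hγ : γ ∈ nearFixers z δ Y) : |(γ.trace : ℝ)| ≤ 3 * Y := by
  refine abs_le_of_sq_le_sq (le_of_mul_le_mul_right ?_ (pow_pos hz 2)) (by positivity)
  rw [← mul_pow (3 * Y)]
  exact (le_add_of_nonneg_right (sq_nonneg _)).trans
    (trace_sq_mul_add_fixForm_re_sq_le hz hδ hδ' hY hγ)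

lemma abs_lowerLeft_le (hz : 0 < z.im) (hδ : 0 ≤ δ) (hδ' : δ ≤ 1) (hY : 0 ≤ Y)
    (hγ : γ ∈ nearFixers z δ Y) : |(γ 1 0 : ℝ)| ≤ 2 * Y / z.im := by
  have hre : |(fixForm γ z).re| ≤ Y * z.im :=
    calc |(fixForm γ z).re| ≤ ‖fixForm γ z‖ := Complex.abs_re_le_norm _
      _ ≤ Y * √δ * z.im := norm_fixForm_le hz hδ hY hγ
      _ ≤ Y * 1 * z.im := by gcongr; exact Real.sqrt_le_one.2 hδ'
      _ = Y * z.im := by rw [mul_one]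
  have hsum : |(fixForm γ z).re + 2 * γ 1 0 * z.im ^ 2| ≤ 3 * Y * z.im :=
    abs_le_of_sq_le_sq ((le_add_of_nonneg_left (by positivity)).trans
      (trace_sq_mul_add_fixForm_re_sq_le hz hδ hδ' hY hγ)) (by positivity)
  have hdiff : |2 * (γ 1 0 : ℝ) * z.im ^ 2| ≤ 4 * Y * z.im := by
    rw [abs_le] at hre hsum ⊢
    constructor <;> linarith
  rw [abs_mul, abs_mul, abs_two, abs_of_pos (pow_pos hz 2)] at hdiff
  rw [le_div_iff₀ hz]
  exact le_of_mul_le_mul_right (by linarith) hz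

lemma norm_fixForm_sub_fixForm_le (hz : 0 < z.im) (hδ : 0 ≤ δ) (hY : 0 ≤ Y)
    (hγ : γ ∈ nearFixers z δ Y) (hγ' : γ' ∈ nearFixers z δ Y) :
    ‖fixForm γ z - fixForm γ' z‖ ≤ 2 * Y * √δ * z.im := by
  linarith [norm_sub_le (fixForm γ z) (fixForm γ' z), norm_fixForm_le hz hδ hY hγ,
    norm_fixForm_le hz hδ hY hγ']

lemma abs_diag_sub_diag_le (hz : 0 < z.im) (hδ : 0 ≤ δ) (hY : 0 ≤ Y)
    (hγ : γ ∈ nearFixers z δ Y) (hγ' : γ' ∈ nearFixers z δ Y) (hc : γ 1 0 = γ' 1 0) :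
    |((γ 1 1 - γ 0 0 : ℤ) : ℝ) - (γ' 1 1 - γ' 0 0 : ℤ)| ≤ 2 * Y * √δ := by
  refine le_of_mul_le_mul_right ?_ hz
  have him : (fixForm γ z - fixForm γ' z).im =
      (((γ 1 1 - γ 0 0 : ℤ) : ℝ) - (γ' 1 1 - γ' 0 0 : ℤ)) * z.im := by
    simp only [fixForm, hc, Complex.sub_im, Complex.add_im, Complex.mul_im, Complex.intCast_re,
      Complex.intCast_im, zero_mul, add_zero, Complex.sub_re, sub_self, sub_zero,
      add_sub_add_left_eq_sub, Int.cast_sub]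
    ring
  calc _ = |(fixForm γ z - fixForm γ' z).im| := by rw [him, abs_mul, abs_of_pos hz]
    _ ≤ ‖fixForm γ z - fixForm γ' z‖ := Complex.abs_im_le_norm _
    _ ≤ 2 * Y * √δ * z.im := norm_fixForm_sub_fixForm_le hz hδ hY hγ hγ'

lemma abs_upperRight_sub_upperRight_le (hz : 0 < z.im) (hδ : 0 ≤ δ) (hY : 0 ≤ Y)
    (hγ : γ ∈ nearFixers z δ Y) (hγ' : γ' ∈ nearFixers z δ Y) (hc : γ 1 0 = γ' 1 0)
    (hdiag : γ 1 1 - γ 0 0 = γ' 1 1 - γ' 0 0) :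
    |(γ 0 1 : ℝ) - γ' 0 1| ≤ 2 * Y * √δ * z.im := by
  have hdiag' : (γ 1 1 : ℂ) - γ 0 0 = γ' 1 1 - γ' 0 0 := by exact_mod_cast hdiag
  have hre : (fixForm γ z - fixForm γ' z).re = -((γ 0 1 : ℝ) - γ' 0 1) := by
    rw [fixForm, fixForm, hc, hdiag', sub_sub_sub_cancel_left]
    simp
  calc _ = |(fixForm γ z - fixForm γ' z).re| := by rw [hre, abs_neg]
    _ ≤ ‖fixForm γ z - fixForm γ' z‖ := Complex.abs_re_le_norm _
    _ ≤ 2 * Y * √δ * z.im := norm_fixForm_sub_fixForm_le hz hδ hY hγ hγ'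

end Displacement

section Lattice

/-- The lattice of integer matrices `γ` such that `g⁻¹ γ g` is diagonal modulo `L`. -/
def diagModLattice (g : SL(2, ℤ)) (L : ℤ) : AddSubgroup Mat₂ where
  carrier := {γ | L ∣ (((g⁻¹ : SL(2, ℤ)) : Mat₂) * γ * (g : Mat₂)) 0 1 ∧
    L ∣ (((g⁻¹ : SL(2, ℤ)) : Mat₂) * γ * (g : Mat₂)) 1 0}
  zero_mem' := by simp
  add_mem' hγ hγ' := by
    simp only [Set.mem_ofPred_eq, mul_add, add_mul, Matrix.add_apply] at hγ hγ' ⊢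
    exact ⟨dvd_add hγ.1 hγ'.1, dvd_add hγ.2 hγ'.2⟩
  neg_mem' hγ := by simpa using hγ

variable {g : SL(2, ℤ)} {L : ℤ} {γ : Mat₂}

lemma exists_modEq_of_mem_diagModLattice (hγ : γ ∈ diagModLattice g L) :
    ∃ s : ℤ, γ 1 0 ≡ g 1 0 * g 1 1 * s [ZMOD L] ∧
      γ 1 1 - γ 0 0 ≡ -(g 0 0 * g 1 1 + g 0 1 * g 1 0) * s [ZMOD L] ∧
      γ 0 1 ≡ -(g 0 0 * g 0 1) * s [ZMOD L] := by
  obtain ⟨h01, h10⟩ := hγ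
  set β : Mat₂ := ((g⁻¹ : SL(2, ℤ)) : Mat₂) * γ * (g : Mat₂)
  have hconj : γ = (g : Mat₂) * β * ((g⁻¹ : SL(2, ℤ)) : Mat₂) := by
    have hmul : (g : Mat₂) * ((g⁻¹ : SL(2, ℤ)) : Mat₂) = 1 := by
      rw [← Matrix.SpecialLinearGroup.coe_mul, mul_inv_cancel, Matrix.SpecialLinearGroup.coe_one]
    simp only [β, ← mul_assoc, hmul, one_mul]
    rw [mul_assoc, hmul, mul_one]
  obtain ⟨u, hu⟩ := h01
  obtain ⟨v, hv⟩ := h10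
  simp only [Int.modEq_iff_dvd]
  refine ⟨β 0 0 - β 1 1, ⟨g 1 0 ^ 2 * u - g 1 1 ^ 2 * v, ?_⟩,
    ⟨2 * g 0 1 * g 1 1 * v - 2 * g 0 0 * g 1 0 * u, ?_⟩, ⟨g 0 1 ^ 2 * v - g 0 0 ^ 2 * u, ?_⟩⟩ <;>
  · rw [hconj]
    simp only [Matrix.SpecialLinearGroup.coe_inv, Matrix.adjugate_fin_two, Matrix.mul_apply,
      Fin.sum_univ_two, Matrix.of_apply, Matrix.cons_val', Matrix.cons_val_zero,
      Matrix.cons_val_one, Matrix.cons_val_fin_one, hu, hv]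
    ring

lemma dvd_upperRight_of_mem_diagModLattice (hγ : γ ∈ diagModLattice g L) (hc : γ 1 0 = 0)
    (hdiag : γ 1 1 - γ 0 0 = 0) : L ∣ γ 0 1 := by
  obtain ⟨s, h10, hd, h01⟩ := exists_modEq_of_mem_diagModLattice hγ
  rw [hc] at h10
  rw [hdiag] at hd
  have hdisc : (g 0 0 * g 1 1 + g 0 1 * g 1 0) ^ 2 - 4 * (g 1 0 * g 1 1) * (g 0 0 * g 0 1) = 1 := by
    have hg := g.det_coe
    rw [Matrix.det_fin_two] at hg
    linear_combination (g 0 0 * g 1 1 - g 0 1 * g 1 0 + 1) * hg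
  have hs : s ≡ 0 [ZMOD L] :=
    calc s = -(g 0 0 * g 1 1 + g 0 1 * g 1 0) * (-(g 0 0 * g 1 1 + g 0 1 * g 1 0) * s) -
          4 * (g 0 0 * g 0 1) * (g 1 0 * g 1 1 * s) := by linear_combination -s * hdisc
      _ ≡ -(g 0 0 * g 1 1 + g 0 1 * g 1 0) * 0 - 4 * (g 0 0 * g 0 1) * 0 [ZMOD L] :=
        (hd.symm.mul_left _).sub (h10.symm.mul_left _)
      _ = 0 := by ring
  exact h01.dvd_iff.2 ((Int.modEq_zero_iff_dvd.1 hs).mul_left _)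

lemma exists_mul_eq_and_dvd_of_mem_diagModLattice (g : SL(2, ℤ)) (hL : 0 < L) :
    ∃ D E : ℤ, 0 < D ∧ 0 < E ∧ D * E = L ∧ (∀ γ ∈ diagModLattice g L, D ∣ γ 1 0) ∧
      ∀ γ ∈ diagModLattice g L, γ 1 0 = 0 → E ∣ γ 1 1 - γ 0 0 := by
  set c₀ : ℤ := g 1 0 * g 1 1
  set D : ℤ := (L.gcd c₀ : ℤ)
  have hDL : D ∣ L := Int.gcd_dvd_left ..
  have hD : 0 < D := Int.natCast_pos.2 (Int.gcd_pos_of_ne_zero_left c₀ hL.ne')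
  refine ⟨D, L / D, hD, Int.ediv_pos_of_pos_of_dvd hL hD.le hDL, Int.mul_ediv_cancel' hDL, ?_, ?_⟩
  · intro γ hγ
    obtain ⟨s, h10, -, -⟩ := exists_modEq_of_mem_diagModLattice hγ
    exact (h10.of_dvd hDL).dvd_iff.2 ((Int.gcd_dvd_right ..).mul_right s)
  · intro γ hγ hc
    obtain ⟨s, h10, hd, -⟩ := exists_modEq_of_mem_diagModLattice hγ
    rw [hc, ← mul_zero c₀] at h10
    have hs : L / D ∣ s := Int.modEq_zero_iff_dvd.1 (h10.cancel_left_div_gcd hL).symm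
    exact (hd.of_dvd (Int.ediv_dvd_of_dvd hDL)).dvd_iff.2 (hs.mul_left _)

end Lattice

section MatrixCount

variable {g : SL(2, ℤ)} {L : ℤ} {z : ℂ} {δ Y : ℝ} {F : Finset Mat₂}

lemma eq_of_lowerLeft_eq_of_diag_eq_of_upperRight_eq_of_trace_eq {γ γ' : Mat₂}
    (hc : γ 1 0 = γ' 1 0) (hdiag : γ 1 1 - γ 0 0 = γ' 1 1 - γ' 0 0) (hb : γ 0 1 = γ' 0 1)
    (htrace : γ.trace = γ'.trace) : γ = γ' := by
  rw [Matrix.trace_fin_two, Matrix.trace_fin_two] at htrace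
  rw [Matrix.eta_fin_two γ, Matrix.eta_fin_two γ', hc, hb, show γ 0 0 = γ' 0 0 by lia,
    show γ 1 1 = γ' 1 1 by lia]

lemma card_le_of_lowerLeft_eq_of_diag_eq (hL : 0 < L) (hz : 0 < z.im) (hδ : 0 ≤ δ) (hδ' : δ ≤ 1)
    (hY : 0 ≤ Y) (hF : ↑F ⊆ nearFixers z δ Y ∩ diagModLattice g L) {c t : ℤ}
    (hc : ∀ γ ∈ F, γ 1 0 = c) (ht : ∀ γ ∈ F, γ 1 1 - γ 0 0 = t) :
    (F.card : ℝ) ≤ (2 * Y * √δ * z.im / L + 1) * (6 * Y + 1) := by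
  refine card_le_div_add_one_mul (fun γ ↦ γ 0 1) hL (by positivity) (by positivity)
    (fun γ hγ γ' hγ' ↦ ?_) (fun γ hγ γ' hγ' ↦ ?_) fun b ↦ ?_
  · refine dvd_upperRight_of_mem_diagModLattice (sub_mem (hF hγ).2 (hF hγ').2)
      (sub_eq_zero.2 ((hc γ hγ).trans (hc γ' hγ').symm)) ?_
    simp only [Matrix.sub_apply]
    linarith [ht γ hγ, ht γ' hγ']
  · exact abs_upperRight_sub_upperRight_le hz hδ hY (hF hγ).1 (hF hγ').1
      ((hc γ hγ).trans (hc γ' hγ').symm) ((ht γ hγ).trans (ht γ' hγ').symm)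
  refine (card_le_div_add_one_mul (R := 6 * Y) (K := 1) (fun γ ↦ γ.trace) one_pos (by positivity)
    zero_le_one (fun _ _ _ _ ↦ one_dvd _) (fun γ hγ γ' hγ' ↦ ?_) fun τ ↦ ?_).trans_eq (by simp)
  · rw [Finset.mem_filter] at hγ hγ'
    calc _ ≤ |(γ.trace : ℝ)| + |(γ'.trace : ℝ)| := abs_sub _ _
      _ ≤ 3 * Y + 3 * Y := add_le_add
        (abs_trace_le hz hδ hδ' hY (hF hγ.1).1) (abs_trace_le hz hδ hδ' hY (hF hγ'.1).1)
      _ = 6 * Y := by ring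
  · refine Nat.cast_le_one.2 (Finset.card_le_one.2 fun γ hγ γ' hγ' ↦ ?_)
    simp only [Finset.mem_filter] at hγ hγ'
    exact eq_of_lowerLeft_eq_of_diag_eq_of_upperRight_eq_of_trace_eq
      ((hc γ hγ.1.1).trans (hc γ' hγ'.1.1).symm) ((ht γ hγ.1.1).trans (ht γ' hγ'.1.1).symm)
      (hγ.1.2.trans hγ'.1.2.symm) (hγ.2.trans hγ'.2.symm)

lemma card_le_prod_of_subset_nearFixers_inter {D E : ℤ} (hD : 0 < D) (hE : 0 < E) (hL : 0 < L)
    (hDdvd : ∀ γ ∈ diagModLattice g L, D ∣ γ 1 0)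
    (hEdvd : ∀ γ ∈ diagModLattice g L, γ 1 0 = 0 → E ∣ γ 1 1 - γ 0 0)
    (hz : 0 < z.im) (hδ : 0 ≤ δ) (hδ' : δ ≤ 1) (hY : 0 ≤ Y)
    (hF : ↑F ⊆ nearFixers z δ Y ∩ diagModLattice g L) :
    (F.card : ℝ) ≤ (4 * Y / z.im / D + 1) * ((2 * Y * √δ / E + 1) *
      ((2 * Y * √δ * z.im / L + 1) * (6 * Y + 1))) := by
  have hsub {γ γ'} (hγ : γ ∈ F) (hγ' : γ' ∈ F) : γ - γ' ∈ diagModLattice g L :=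
    sub_mem (hF hγ).2 (hF hγ').2
  refine card_le_div_add_one_mul (fun γ ↦ γ 1 0) hD (by positivity) (by positivity)
    (fun γ hγ γ' hγ' ↦ hDdvd _ (hsub hγ hγ')) (fun γ hγ γ' hγ' ↦ ?_) fun c ↦ ?_
  · calc _ ≤ |(γ 1 0 : ℝ)| + |(γ' 1 0 : ℝ)| := abs_sub _ _
      _ ≤ 2 * Y / z.im + 2 * Y / z.im := add_le_add
        (abs_lowerLeft_le hz hδ hδ' hY (hF hγ).1) (abs_lowerLeft_le hz hδ hδ' hY (hF hγ').1)
      _ = 4 * Y / z.im := by ring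
  refine card_le_div_add_one_mul (fun γ ↦ γ 1 1 - γ 0 0) hE (by positivity) (by positivity)
    (fun γ hγ γ' hγ' ↦ ?_) (fun γ hγ γ' hγ' ↦ ?_) fun t ↦ ?_
  · rw [Finset.mem_filter] at hγ hγ'
    convert hEdvd _ (hsub hγ.1 hγ'.1) (sub_eq_zero.2 (hγ.2.trans hγ'.2.symm)) using 1
    simp only [Matrix.sub_apply]
    ring
  · rw [Finset.mem_filter] at hγ hγ'
    exact abs_diag_sub_diag_le hz hδ hY (hF hγ.1).1 (hF hγ'.1).1 (hγ.2.trans hγ'.2.symm)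
  have hmem {γ} : γ ∈ (F.filter (· 1 0 = c)).filter (fun γ ↦ γ 1 1 - γ 0 0 = t) ↔
      (γ ∈ F ∧ γ 1 0 = c) ∧ γ 1 1 - γ 0 0 = t := by
    simp only [Finset.mem_filter]
  exact card_le_of_lowerLeft_eq_of_diag_eq hL hz hδ hδ' hY (fun γ hγ ↦ hF (hmem.1 hγ).1.1)
    (fun γ hγ ↦ (hmem.1 hγ).1.2) (fun γ hγ ↦ (hmem.1 hγ).2)

lemma prod_interval_counts_le {Y y s D E : ℝ} (hY : 1 ≤ Y) (hy : 1 ≤ y) (hs : 0 ≤ s) (hs' : s ≤ 1)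
    (hD : 1 ≤ D) (hE : 1 ≤ E) :
    (4 * Y / y / D + 1) * ((2 * Y * s / E + 1) * ((2 * Y * s * y / (D * E) + 1) * (6 * Y + 1))) ≤
      448 * (Y ^ 2 + Y ^ 3 * s * y / (D * E) + Y ^ 4 * s ^ 2 / (D * E)) := by
  set A := Y / y / D with hA
  set B := Y * s / E with hB
  set C := Y * s * y / (D * E) with hC
  set T := Y ^ 3 * s ^ 2 / (D * E) with hT
  have hC0 : 0 ≤ C := by positivity
  have hT0 : 0 ≤ T := by positivity
  have hAY : A ≤ Y := (div_le_self (by positivity) hD).trans (div_le_self (by positivity) hy)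
  have hBY : B ≤ Y :=
    (div_le_self (by positivity) hE).trans (mul_le_of_le_one_right (by positivity) hs')
  have hAB : A * B ≤ Y * C :=
    calc A * B = Y ^ 2 * s / (D * E) / y := by rw [hA, hB]; field_simp
      _ ≤ Y ^ 2 * s / (D * E) := div_le_self (by positivity) hy
      _ ≤ Y ^ 2 * s / (D * E) * y := le_mul_of_one_le_right (by positivity) hy
      _ = Y * C := by rw [hC]; ring
  have hABC : A * B * C ≤ T :=
    calc A * B * C = T / (D * E) := by rw [hA, hB, hC, hT]; field_simp
      _ ≤ T := div_le_self hT0 (one_le_mul_of_one_le_of_one_le hD hE)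
  have hprod : (A + 1) * (B + 1) * (C + 1) ≤ 4 * (Y + Y * C + T) := by
    linarith [mul_le_mul_of_nonneg_right hAY hC0, mul_le_mul_of_nonneg_right hBY hC0,
      mul_le_mul_of_nonneg_right hY hC0]
  calc _ = (4 * A + 1) * ((2 * B + 1) * ((2 * C + 1) * (6 * Y + 1))) := by
        rw [hA, hB, hC]; ring
    _ ≤ 4 * (A + 1) * (2 * (B + 1) * (2 * (C + 1) * (7 * Y))) := by gcongr <;> linarith
    _ = 112 * Y * ((A + 1) * (B + 1) * (C + 1)) := by ring
    _ ≤ 112 * Y * (4 * (Y + Y * C + T)) := by gcongr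
    _ = _ := by rw [hC, hT]; ring

theorem finite_and_ncard_nearFixers_inter_le (g : SL(2, ℤ)) (hL : 0 < L) (hz : 1 ≤ z.im)
    (hδ : 0 ≤ δ) (hδ' : δ ≤ 1) (hY : 1 ≤ Y) :
    (nearFixers z δ Y ∩ diagModLattice g L).Finite ∧
      ((nearFixers z δ Y ∩ diagModLattice g L).ncard : ℝ) ≤
        448 * (Y ^ 2 + Y ^ 3 * √δ * z.im / L + Y ^ 4 * δ / L) := by
  refine finite_and_ncard_le_of_forall_finset fun F hF ↦ ?_
  obtain ⟨D, E, hD, hE, rfl, hDdvd, hEdvd⟩ := exists_mul_eq_and_dvd_of_mem_diagModLattice g hL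
  have hcount := card_le_prod_of_subset_nearFixers_inter hD hE hL hDdvd hEdvd
    (zero_lt_one.trans_le hz) hδ hδ' (zero_le_one.trans hY) hF
  have hbound := prod_interval_counts_le hY hz (Real.sqrt_nonneg δ) (Real.sqrt_le_one.2 hδ')
    (D := D) (E := E) (by exact_mod_cast hD) (by exact_mod_cast hE)
  rw [Real.sq_sqrt hδ] at hbound
  push_cast at hcount ⊢
  exact hcount.trans hbound

lemma sum_Mcount_le_ncard {L : ℕ} {I : Finset ℕ}
    (hfin : (nearFixers z δ Y ∩ diagModLattice g L).Finite)
    (hI : ∀ m ∈ I, 0 < m ∧ (m : ℝ) ≤ Y ^ 2) :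
    ∑ m ∈ I, Mcount z g δ L m ≤ (nearFixers z δ Y ∩ diagModLattice g L).ncard := by
  have hM : ∀ m ∈ I,
      Mcount z g δ L m = (hfin.toFinset.filter fun γ ↦ γ.det.toNat = m).card := by
    intro m hm
    obtain ⟨hm0, hmY⟩ := hI m hm
    rw [Mcount, ← Set.ncard_coe_finset]
    congr 1
    ext γ
    simp only [Finset.coe_filter, Set.Finite.mem_toFinset, Set.mem_ofPred_eq]
    constructor
    · rintro ⟨hdet, hu, hdvd⟩
      exact ⟨⟨⟨by lia, by rw [hdet]; exact_mod_cast hmY, hu⟩, hdvd⟩, by lia⟩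
    · rintro ⟨⟨⟨hdet, -, hu⟩, hdvd⟩, hm⟩
      exact ⟨by rw [← hm, Int.toNat_of_nonneg hdet.le], hu, hdvd⟩
  rw [Finset.sum_congr rfl hM, Finset.sum_card_fiberwise_eq_card_filter,
    Set.ncard_eq_toFinset_card _ hfin]
  exact Finset.card_filter_le _ _

end MatrixCount

theorem stmt_15_general :
    ∃ Cst : ℝ, 0 < Cst ∧
      ∀ L : ℕ, 0 < L →
      ∀ z : ℂ, 1 ≤ z.im →
      ∀ g : SL(2, ℤ),
      ∀ δ : ℝ, 0 ≤ δ → δ ≤ 1 →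
      ∀ X : ℝ, 1 ≤ X →
      ∀ P : Finset ℕ, (∀ q ∈ P, q.Prime ∧ (q : ℝ) ≤ 2 * X) →
        (∑ q ∈ P ×ˢ P, (Mcount z g δ L (q.1 * q.2) : ℝ)) ≤
          Cst * (X ^ 2 + X ^ 3 * √δ * z.im / L + X ^ 4 * δ / L) := by
  refine ⟨14336, by norm_num, fun L hL z hz g δ hδ hδ' X hX P hP ↦ ?_⟩
  obtain ⟨hfin, hcard⟩ := finite_and_ncard_nearFixers_inter_le (Y := 2 * X) g
    (Int.natCast_pos.2 hL) hz hδ hδ' (by linarith)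
  set I := (P ×ˢ P).image fun q ↦ q.1 * q.2 with hI
  have hI_le : ∀ m ∈ I, 0 < m ∧ (m : ℝ) ≤ (2 * X) ^ 2 := by
    simp only [hI, Finset.forall_mem_image, Finset.mem_product]
    rintro q ⟨hq₁, hq₂⟩
    refine ⟨Nat.mul_pos (hP _ hq₁).1.pos (hP _ hq₂).1.pos, ?_⟩
    rw [Nat.cast_mul, sq]
    exact mul_le_mul (hP _ hq₁).2 (hP _ hq₂).2 (by positivity) (by positivity)
  have hsum : ∑ q ∈ P ×ˢ P, Mcount z g δ L (q.1 * q.2) ≤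
      2 * (nearFixers z δ (2 * X) ∩ diagModLattice g L).ncard :=
    (sum_product_mul_le_two_mul_sum_image (fun q hq ↦ (hP q hq).1) _).trans
      (Nat.mul_le_mul_left 2 (sum_Mcount_le_ncard hfin hI_le))
  calc (∑ q ∈ P ×ˢ P, (Mcount z g δ L (q.1 * q.2) : ℝ))
      ≤ 2 * (nearFixers z δ (2 * X) ∩ diagModLattice g L).ncard := by exact_mod_cast hsum
    _ ≤ 2 * (448 * ((2 * X) ^ 2 + (2 * X) ^ 3 * √δ * z.im / L + (2 * X) ^ 4 * δ / L)) := by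
      gcongr
      exact_mod_cast hcard
    _ = 3584 * X ^ 2 + 7168 * (X ^ 3 * √δ * z.im / L) + 14336 * (X ^ 4 * δ / L) := by ring
    _ ≤ 14336 * (X ^ 2 + X ^ 3 * √δ * z.im / L + X ^ 4 * δ / L) := by
      have : 0 ≤ X ^ 3 * √δ * z.im / L := by positivity
      linarith [sq_nonneg X]

/-- Uniform counting bound for the sums `Σ M(z, g; δ', p^l, l₁l₂)` over pairs of primes
`l₁, l₂ ∈ Pr ⊆ [X, 2X]`. -/
theorem stmt_15 :
    ∃ Cst : ℝ, 0 < Cst ∧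
      ∀ (p : ℕ), p.Prime →
      ∀ l : ℕ, ∀ z : ℂ, 1 ≤ z.im →
      ∀ g : Matrix.SpecialLinearGroup (Fin 2) ℤ,
      ∀ δ : ℝ, 0 < δ → δ < 1 →
      ∀ X : ℝ, 1 ≤ X →
      ∀ Pr : Finset ℕ, (∀ q ∈ Pr, Nat.Prime q ∧ X ≤ (q : ℝ) ∧ (q : ℝ) ≤ 2 * X) → p ∉ Pr →
        (∑ q ∈ Pr ×ˢ Pr, (Mcount z g δ (p ^ l) (q.1 * q.2) : ℝ)) ≤
          Cst * (X ^ 2 + X ^ 3 * Real.sqrt δ * z.im / (p : ℝ) ^ l + X ^ 4 * δ / (p : ℝ) ^ l) := by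
  obtain ⟨Cst, hCst, hbound⟩ := stmt_15_general
  refine ⟨Cst, hCst, fun p hp l z hz g δ hδ hδ' X hX Pr hPr _ ↦ ?_⟩
  exact_mod_cast hbound (p ^ l) (pow_pos hp.pos l) z hz g δ hδ.le hδ'.le X hX Pr
    fun q hq ↦ ⟨(hPr q hq).1, (hPr q hq).2.2⟩
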